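/- arXiv:1208.2343 — 3 statements merged into one kernel-verified Lean document; each statement's English description precedes it below -/
import Mathlib

section
/- Assume the diagonal setup. Let H_n := span{e_1, …, e_n} and K_1 ≥ 0, K_2 ∈ ℝ. Suppose F : H → H and B : H → L(H) (bounded operators on H) satisfy ‖F(x) − F(y)‖ + ‖B(x) − B(y)‖_{HS} ≤ K_1‖x − y‖ for all x, y ∈ H, and suppose that for all x, y ∈ ⋃_n H_n the following hold: Ran(B(x) − B(y)) ⊆ H_0, the operator B_0^{-1}(B(x) − B(y)) is Hilbert–Schmidt, and 2⟨F(x) − F(y), B_0^{-2}(x − y)⟩ + ‖B_0^{-1}(B(x) − B(y))‖²_{HS} ≤ K_2‖B_0^{-1}(x − y)‖². Then for all x, y ∈ Dom(B_0^{-2}) the same three conclusions hold: Ran(B(x) − B(y)) ⊆ H_0, B_0^{-1}(B(x) − B(y)) is Hilbert–Schmidt, and 2⟨F(x) − F(y), B_0^{-2}(x − y)⟩ + ‖B_0^{-1}(B(x) − B(y))‖²_{HS} ≤ K_2‖B_0^{-1}(x − y)‖². -/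
/-!
Truncate `x, y` to `x_N, y_N ∈ H_N`. As `x - y ∈ Dom(B₀⁻²)`, both `B₀⁻²(x_N - y_N)` and
`‖B₀⁻¹(x_N - y_N)‖²` are partial sums of convergent series, and `F` is continuous, so the bound
`R_N := K₂‖B₀⁻¹(x_N - y_N)‖² - 2⟨F x_N - F y_N, B₀⁻²(x_N - y_N)⟩` that the hypothesis gives for the
Hilbert–Schmidt norm at stage `N` converges to the corresponding `R` for `x, y`.
The matrix entries of `B x_N - B y_N` converge to those of `B x - B y` by the Lipschitz bound, so
every finite subsum of `∑_{n,m} b_m⁻² ⟨(B x - B y) e_n, e_m⟩²` is at most `R` (Fatou's lemma for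
double series, `summable_tsum_le_of_tendsto`). This gives the Hilbert–Schmidt property and the
inequality. The range condition follows by applying Cauchy–Schwarz to
`⟨T u, e_m⟩ = ⟨u, T* e_m⟩` and `‖T* e_m‖² = ∑_n ⟨T e_n, e_m⟩²` (`memDom_one_apply`).
-/

open scoped RealInnerProductSpace

variable {H : Type*} [NormedAddCommGroup H] [InnerProductSpace ℝ H] [CompleteSpace H]

/-- `B₀⁻ᵏ x = ∑ₙ bₙ⁻ᵏ ⟨x, eₙ⟩ eₙ`, the diagonal negative power of
`B₀ = ∑ₙ bₙ ⟨·, eₙ⟩ eₙ` (defined as a `tsum`; meaningful on `Dom(B₀⁻ᵏ)`). -/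
noncomputable def invPow (e : HilbertBasis ℕ ℝ H) (b : ℕ → ℝ) (k : ℕ) (x : H) : H :=
  ∑' n, (((b n)⁻¹) ^ k * ⟪x, e n⟫) • e n

/-- `x ∈ Dom(B₀⁻ᵏ)`, i.e. `∑ₙ bₙ⁻²ᵏ ⟨x, eₙ⟩² < ∞`.  For `k = 1` this is `x ∈ H₀`. -/
def memDom (e : HilbertBasis ℕ ℝ H) (b : ℕ → ℝ) (k : ℕ) (x : H) : Prop :=
  Summable (fun n => ((b n)⁻¹) ^ (2 * k) * ⟪x, e n⟫ ^ 2)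

/-- `‖z‖²_{H₀} = ‖B₀⁻¹ z‖² = ∑ₙ bₙ⁻² ⟨z, eₙ⟩²`. -/
noncomputable def h0Sq (e : HilbertBasis ℕ ℝ H) (b : ℕ → ℝ) (z : H) : ℝ :=
  ∑' n, ((b n)⁻¹) ^ 2 * ⟪z, e n⟫ ^ 2

open Filter Topology

/-- The orthogonal projection of `z` onto `span {e 0, …, e (N - 1)}`. -/
noncomputable def trunc (e : HilbertBasis ℕ ℝ H) (N : ℕ) (z : H) : H :=
  ∑ i ∈ Finset.range N, ⟪z, e i⟫ • e i

lemma trunc_sub (e : HilbertBasis ℕ ℝ H) (N : ℕ) (x y : H) :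
    trunc e N x - trunc e N y = trunc e N (x - y) := by
  simp only [trunc, ← Finset.sum_sub_distrib, inner_sub_left, sub_smul]

lemma trunc_mem (e : HilbertBasis ℕ ℝ H) (N : ℕ) (x : H) :
    trunc e N x ∈ ⋃ n : ℕ,
      ((Submodule.span ℝ (Set.range fun i : Fin n => e i.1) : Submodule ℝ H) : Set H) := by
  refine Set.mem_iUnion.2 ⟨N, Submodule.sum_mem _ fun i hi => Submodule.smul_mem _ _ ?_⟩
  exact Submodule.subset_span ⟨⟨i, Finset.mem_range.1 hi⟩, rfl⟩

lemma tendsto_trunc (e : HilbertBasis ℕ ℝ H) (x : H) :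
    Tendsto (fun N => trunc e N x) atTop (𝓝 x) := by
  have h := (e.hasSum_repr x).tendsto_sum_nat
  simp only [e.repr_apply_apply] at h
  simpa only [trunc, real_inner_comm] using h

lemma inner_trunc (e : HilbertBasis ℕ ℝ H) (N : ℕ) (x : H) (n : ℕ) :
    ⟪trunc e N x, e n⟫ = if n < N then ⟪x, e n⟫ else 0 := by
  have h := e.orthonormal
  rw [orthonormal_iff_ite] at h
  simp [trunc, sum_inner, real_inner_smul_left, h]

lemma invPow_trunc (e : HilbertBasis ℕ ℝ H) (b : ℕ → ℝ) (k N : ℕ) (x : H) :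
    invPow e b k (trunc e N x) =
      ∑ n ∈ Finset.range N, (((b n)⁻¹) ^ k * ⟪x, e n⟫) • e n := by
  rw [invPow, tsum_eq_sum (s := Finset.range N)]
  · refine Finset.sum_congr rfl fun n hn => ?_
    rw [inner_trunc, if_pos (Finset.mem_range.1 hn)]
  · intro n hn
    rw [inner_trunc, if_neg (by simpa using hn)]
    simp

lemma h0Sq_trunc (e : HilbertBasis ℕ ℝ H) (b : ℕ → ℝ) (N : ℕ) (x : H) :
    h0Sq e b (trunc e N x) =
      ∑ n ∈ Finset.range N, ((b n)⁻¹) ^ 2 * ⟪x, e n⟫ ^ 2 := by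
  rw [h0Sq, tsum_eq_sum (s := Finset.range N)]
  · refine Finset.sum_congr rfl fun n hn => ?_
    rw [inner_trunc, if_pos (Finset.mem_range.1 hn)]
  · intro n hn
    rw [inner_trunc, if_neg (by simpa using hn)]
    simp

lemma memDom.sub {e : HilbertBasis ℕ ℝ H} {b : ℕ → ℝ} {k : ℕ} {x y : H}
    (hx : memDom e b k x) (hy : memDom e b k y) : memDom e b k (x - y) := by
  have h : Summable _ := (Summable.add hx hy).mul_left 2
  refine Summable.of_nonneg_of_le (fun n => ?_) (fun n => ?_) h
  · rw [pow_mul']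
    positivity
  · have h0 : 0 ≤ ((b n)⁻¹) ^ (2 * k) := by
      rw [pow_mul']
      positivity
    rw [inner_sub_left]
    nlinarith [mul_nonneg h0 (sq_nonneg (⟪x, e n⟫ + ⟪y, e n⟫))]

lemma memDom.one_of_two {e : HilbertBasis ℕ ℝ H} {b : ℕ → ℝ} (hb_pos : ∀ n, 0 < b n)
    {C : ℝ} (hC : ∀ n, b n ≤ C) {x : H} (hx : memDom e b 2 x) : memDom e b 1 x := by
  have h : Summable _ := Summable.mul_left (C ^ 2) hx
  refine Summable.of_nonneg_of_le (fun n => ?_) (fun n => ?_) h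
  · rw [pow_mul]
    positivity
  have hb := hb_pos n
  have h1 : ((b n)⁻¹) ^ (2 * 1) = (b n) ^ 2 * ((b n)⁻¹) ^ (2 * 2) := by
    norm_num
    field_simp
  rw [h1, mul_assoc]
  have h2 : b n ^ 2 ≤ C ^ 2 := pow_le_pow_left₀ hb.le (hC n) 2
  refine mul_le_mul_of_nonneg_right h2 ?_
  rw [pow_mul]
  positivity

lemma tendsto_h0Sq_trunc {e : HilbertBasis ℕ ℝ H} {b : ℕ → ℝ} {x : H} (hx : memDom e b 1 x) :
    Tendsto (fun N => h0Sq e b (trunc e N x)) atTop (𝓝 (h0Sq e b x)) := by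
  simp only [h0Sq_trunc]
  exact (Summable.hasSum hx).tendsto_sum_nat

lemma tendsto_invPow_trunc {e : HilbertBasis ℕ ℝ H} {b : ℕ → ℝ} {k : ℕ} {x : H}
    (hx : memDom e b k x) :
    Tendsto (fun N => invPow e b k (trunc e N x)) atTop (𝓝 (invPow e b k x)) := by
  simp only [invPow_trunc]
  refine (Summable.hasSum ?_).tendsto_sum_nat
  have h := (e.orthonormal.orthogonalFamily.summable_iff_norm_sq_summable
    (fun n => ((b n)⁻¹) ^ k * ⟪x, e n⟫)).2 ?_
  · simpa using h
  · refine Summable.congr hx fun n => ?_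
    rw [Real.norm_eq_abs, sq_abs, mul_pow, ← pow_mul, mul_comm k 2]

/-- Fatou's lemma for nonnegative series. -/
lemma summable_tsum_le_of_tendsto {ι : Type*} {f : ℕ → ι → ℝ} {g : ι → ℝ} {R : ℕ → ℝ} {r : ℝ}
    (hf : ∀ N i, 0 ≤ f N i) (hs : ∀ N, Summable (f N)) (hR : ∀ N, ∑' i, f N i ≤ R N)
    (hfg : ∀ i, Tendsto (fun N => f N i) atTop (𝓝 (g i))) (hr : Tendsto R atTop (𝓝 r)) :
    Summable g ∧ ∑' i, g i ≤ r := by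
  have hg : ∀ i, 0 ≤ g i := fun i => ge_of_tendsto' (hfg i) fun N => hf N i
  have hle : ∀ s : Finset ι, ∑ i ∈ s, g i ≤ r := fun s =>
    le_of_tendsto_of_tendsto' (tendsto_finsetSum s fun i _ => hfg i) hr fun N =>
      ((hs N).sum_le_tsum s fun i _ => hf N i).trans (hR N)
  have hsum := summable_of_sum_le hg hle
  exact ⟨hsum, hsum.tsum_le_of_sum_le hle⟩

/-- If `B₀⁻¹ T` has square-summable matrix entries, then `T` maps `H` into `H₀`. -/
lemma memDom_one_apply (e : HilbertBasis ℕ ℝ H) (b : ℕ → ℝ) (T : H →L[ℝ] H)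
    (hT : Summable fun p : ℕ × ℕ => ((b p.2)⁻¹) ^ 2 * ⟪T (e p.1), e p.2⟫ ^ 2) (u : H) :
    memDom e b 1 (T u) := by
  have hcol : Summable fun m => ∑' n, ((b m)⁻¹) ^ 2 * ⟪T (e n), e m⟫ ^ 2 :=
    hT.prod_symm.prod
  refine Summable.of_nonneg_of_le (fun m => ?_) (fun m => ?_)
    (hcol.mul_left (‖u‖ ^ 2))
  · rw [pow_mul]
    positivity
  -- Parseval's identity for `T* e_m`
  have hpars : ∑' n, ⟪T (e n), e m⟫ ^ 2 = ‖T.adjoint (e m)‖ ^ 2 := by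
    rw [← real_inner_self_eq_norm_sq, ← e.tsum_inner_mul_inner]
    refine tsum_congr fun n => ?_
    rw [← ContinuousLinearMap.adjoint_inner_right, real_inner_comm (e n), sq]
  have hcs : ⟪T u, e m⟫ ^ 2 ≤ ‖u‖ ^ 2 * ‖T.adjoint (e m)‖ ^ 2 := by
    rw [← ContinuousLinearMap.adjoint_inner_right, ← mul_pow]
    exact sq_le_sq.2 ((abs_real_inner_le_norm _ _).trans (le_abs_self _))
  rw [tsum_mul_left, hpars, mul_one, mul_left_comm]
  exact mul_le_mul_of_nonneg_left hcs (by positivity)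

/-- Remark 1.1(1) of the paper.
If `F`, `B` are Lipschitz (in `F` plus Hilbert–Schmidt sense) and hypothesis (H4) holds for all
`x, y` in the union of the finite dimensional spaces `Hₙ = span{e₁,…,eₙ}`, then (H4) holds for
all `x, y ∈ Dom(B₀⁻²)`: the range of `B(x) - B(y)` lies in `H₀`, `B₀⁻¹(B(x) - B(y))` is
Hilbert–Schmidt, and
`2⟨F(x) - F(y), B₀⁻²(x-y)⟩ + ‖B₀⁻¹(B(x)-B(y))‖²_{HS} ≤ K₂ ‖B₀⁻¹(x-y)‖²`. -/
theorem stmt2 (e : HilbertBasis ℕ ℝ H) (b : ℕ → ℝ)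
    (hb_pos : ∀ n, 0 < b n) (hb_bdd : ∃ C : ℝ, ∀ n, b n ≤ C)
    (K₁ : ℝ) (hK₁ : 0 ≤ K₁) (K₂ : ℝ)
    (F : H → H) (B : H → H →L[ℝ] H)
    (hBHS : ∀ x y : H, Summable (fun n => ‖(B x - B y) (e n)‖ ^ 2))
    (hLip : ∀ x y : H,
      ‖F x - F y‖ + Real.sqrt (∑' n, ‖(B x - B y) (e n)‖ ^ 2) ≤ K₁ * ‖x - y‖)
    (hH4 : ∀ x ∈ ⋃ n : ℕ, ((Submodule.span ℝ (Set.range fun i : Fin n => e i.1) : Submodule ℝ H) : Set H),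
           ∀ y ∈ ⋃ n : ℕ, ((Submodule.span ℝ (Set.range fun i : Fin n => e i.1) : Submodule ℝ H) : Set H),
      (∀ u : H, memDom e b 1 ((B x - B y) u)) ∧
      Summable (fun n => h0Sq e b ((B x - B y) (e n))) ∧
      2 * ⟪F x - F y, invPow e b 2 (x - y)⟫ + (∑' n, h0Sq e b ((B x - B y) (e n)))
        ≤ K₂ * h0Sq e b (x - y)) :
    ∀ x y : H, memDom e b 2 x → memDom e b 2 y →
      (∀ u : H, memDom e b 1 ((B x - B y) u)) ∧
      Summable (fun n => h0Sq e b ((B x - B y) (e n))) ∧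
      2 * ⟪F x - F y, invPow e b 2 (x - y)⟫ + (∑' n, h0Sq e b ((B x - B y) (e n)))
        ≤ K₂ * h0Sq e b (x - y) := by
  intro x y hx hy
  obtain ⟨C, hC⟩ := hb_bdd
  have hd := hx.sub hy
  have hd1 := hd.one_of_two hb_pos hC
  have hF : ∀ z, Tendsto (fun N => F (trunc e N z)) atTop (𝓝 (F z)) := by
    intro z
    have h0 : Tendsto (fun N => K₁ * ‖trunc e N z - z‖) atTop (𝓝 0) := by
      simpa using (tendsto_iff_norm_sub_tendsto_zero.1 (tendsto_trunc e z)).const_mul K₁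
    refine tendsto_iff_norm_sub_tendsto_zero.2
      (squeeze_zero (fun _ => norm_nonneg _) (fun N => ?_) h0)
    exact (le_add_of_nonneg_right (Real.sqrt_nonneg _)).trans (hLip _ _)
  have hB : ∀ z n, Tendsto (fun N => B (trunc e N z) (e n)) atTop (𝓝 (B z (e n))) := by
    intro z n
    have h0 : Tendsto (fun N => K₁ * ‖trunc e N z - z‖) atTop (𝓝 0) := by
      simpa using (tendsto_iff_norm_sub_tendsto_zero.1 (tendsto_trunc e z)).const_mul K₁
    refine tendsto_iff_norm_sub_tendsto_zero.2
      (squeeze_zero (fun _ => norm_nonneg _) (fun N => ?_) h0)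
    refine le_trans ?_ ((le_add_of_nonneg_left (norm_nonneg _)).trans (hLip (trunc e N z) z))
    exact Real.le_sqrt_of_sq_le
      ((hBHS (trunc e N z) z).le_tsum n fun _ _ => by positivity)
  have key := fun N => hH4 _ (trunc_mem e N x) _ (trunc_mem e N y)
  simp only [trunc_sub] at key
  have hR : Tendsto (fun N => K₂ * h0Sq e b (trunc e N (x - y)) -
      2 * ⟪F (trunc e N x) - F (trunc e N y), invPow e b 2 (trunc e N (x - y))⟫) atTop
      (𝓝 (K₂ * h0Sq e b (x - y) - 2 * ⟪F x - F y, invPow e b 2 (x - y)⟫)) :=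
    ((tendsto_h0Sq_trunc hd1).const_mul K₂).sub
      ((((hF x).sub (hF y)).inner (tendsto_invPow_trunc hd)).const_mul 2)
  have hsN : ∀ N, Summable fun p : ℕ × ℕ =>
      ((b p.2)⁻¹) ^ 2 * ⟪(B (trunc e N x) - B (trunc e N y)) (e p.1), e p.2⟫ ^ 2 := fun N =>
    (summable_prod_of_nonneg fun p => by positivity).2
      ⟨fun n => (key N).1 (e n), (key N).2.1⟩
  obtain ⟨hs, hle⟩ := summable_tsum_le_of_tendsto
    (g := fun p : ℕ × ℕ => ((b p.2)⁻¹) ^ 2 * ⟪(B x - B y) (e p.1), e p.2⟫ ^ 2)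
    (fun N p => by positivity) hsN
    (fun N => by
      rw [(hsN N).tsum_prod]
      have h := (key N).2.2
      simp only [h0Sq] at h ⊢
      linarith)
    (fun p => by
      simp only [sub_apply]
      exact ((((hB x p.1).sub (hB y p.1)).inner tendsto_const_nhds).pow 2).const_mul _)
    hR
  refine ⟨memDom_one_apply e b _ hs, hs.prod, ?_⟩
  rw [hs.tsum_prod] at hle
  simp only [h0Sq] at hle ⊢
  linarith
end

section
/- Assume the diagonal setup with eigenvalue sequence (λ_n) and fix ε > 0, K_1 ≥ 0, K_2 ∈ ℝ. Let F : H → H satisfy ‖F(x) − F(y)‖ ≤ K_1‖x − y‖ for all x, y ∈ H, and let B : H → L(H). Let u, v ∈ H be such that w := u − v satisfies ‖w‖_V² := ∑_n λ_{n,ε} b_n^{-2}⟨w,e_n⟩² < ∞, Ran(B(u) − B(v)) ⊆ H_0, the operator B_0^{-1}(B(u) − B(v)) is Hilbert–Schmidt, and 2⟨F(u) − F(v), B_0^{-2}w⟩ + ‖B_0^{-1}(B(u) − B(v))‖²_{HS} ≤ K_2‖w‖²_{H_0}. Then ‖B_0^{-1}(B(u) − B(v))‖²_{HS} ≤ K_2‖w‖²_{H_0}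 + (2 K_1 ‖B_0‖² / ε) ‖w‖²_V. -/
/-!
Put `w = u - v`, `T = B₀⁻² w`, `S = sup bₙ` and `V = ‖w‖²_V`. Since `λₙ ≥ 0`, each term of `‖T‖²`
satisfies `bₙ⁻⁴ ⟨w, eₙ⟩² ≤ ε⁻¹ (λₙ + ε bₙ⁻²) bₙ⁻² ⟨w, eₙ⟩²`, so the series for `T` converges and
`‖T‖² ≤ V / ε`. Moreover `⟨w, eₙ⟩ = bₙ² ⟨T, eₙ⟩`, hence `‖w‖ ≤ S² ‖T‖`. By Cauchy–Schwarz and the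
Lipschitz bound, `-⟨F u - F v, T⟩ ≤ K₁ ‖w‖ ‖T‖ ≤ K₁ S² ‖T‖² ≤ K₁ S² V / ε`, and inserting this in
the one-sided hypothesis gives the estimate.
-/

open scoped RealInnerProductSpace
open Filter

variable {H : Type*} [NormedAddCommGroup H] [InnerProductSpace ℝ H] [CompleteSpace H]

/-- `‖v‖²_V = ∑ₙ (λₙ + ε bₙ⁻²) bₙ⁻² ⟨v, eₙ⟩²`. -/
noncomputable def vSq (e : HilbertBasis ℕ ℝ H) (b l : ℕ → ℝ) (ε : ℝ) (v : H) : ℝ :=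
  ∑' n, (l n + ε * ((b n)⁻¹) ^ 2) * ((b n)⁻¹) ^ 2 * ⟪v, e n⟫ ^ 2

/-- Parseval's identity. -/
lemma hasSum_inner_sq (e : HilbertBasis ℕ ℝ H) (x : H) :
    HasSum (fun n => ⟪x, e n⟫ ^ 2) (‖x‖ ^ 2) := by
  have h := e.hasSum_inner_mul_inner x x
  rw [real_inner_self_eq_norm_sq] at h
  simpa only [real_inner_comm x, ← sq] using h

/-- Riesz–Fischer: without square summability the `tsum` could take its junk value. -/
lemma inner_tsum_smul (e : HilbertBasis ℕ ℝ H) (a : ℕ → ℝ) (ha : Summable (fun n => a n ^ 2))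
    (n : ℕ) : ⟪∑' k, a k • e k, e n⟫ = a n := by
  have hmem : Memℓp a 2 := by
    refine memℓp_gen ?_
    simpa using ha
  have h := e.hasSum_repr_symm ⟨a, hmem⟩
  have h' : ∑' k, a k • e k = e.repr.symm ⟨a, hmem⟩ := h.tsum_eq
  rw [h', real_inner_comm, ← e.repr_apply_apply]
  simp

/-- the Hilbert–Schmidt estimate (1.30)/Appendix B step (1) of the paper.
If `F` is `K₁`-Lipschitz, `w = u - v` has finite `V`-norm, `D = B(u) - B(v)` has range in
`H₀` with `B₀⁻¹ D` Hilbert–Schmidt, and the one-sided hypothesis (H4)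
`2⟨F(u) - F(v), B₀⁻² w⟩ + ‖B₀⁻¹ D‖²_{HS} ≤ K₂ ‖w‖²_{H₀}` holds, then
`‖B₀⁻¹ D‖²_{HS} ≤ K₂ ‖w‖²_{H₀} + (2 K₁ ‖B₀‖²/ε) ‖w‖²_V`. -/
theorem stmt6 (e : HilbertBasis ℕ ℝ H) (b l : ℕ → ℝ)
    (hb_pos : ∀ n, 0 < b n) (hb_bdd : ∃ C : ℝ, ∀ n, b n ≤ C)
    (hl_nonneg : ∀ n, 0 ≤ l n) (hl_mono : Monotone l)
    (hl_top : Tendsto l atTop atTop)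
    (ε : ℝ) (hε : 0 < ε) (K₁ : ℝ) (hK₁ : 0 ≤ K₁) (K₂ : ℝ)
    (F : H → H) (hF : ∀ x y : H, ‖F x - F y‖ ≤ K₁ * ‖x - y‖)
    (B : H → H →L[ℝ] H) (u v : H)
    (hwV : Summable (fun n => (l n + ε * ((b n)⁻¹) ^ 2) * ((b n)⁻¹) ^ 2 * ⟪u - v, e n⟫ ^ 2))
    (hRan : ∀ z : H, memDom e b 1 ((B u - B v) z))
    (hHS : Summable (fun n => h0Sq e b ((B u - B v) (e n))))
    (hH4 : 2 * ⟪F u - F v, invPow e b 2 (u - v)⟫ + (∑' n, h0Sq e b ((B u - B v) (e n)))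
      ≤ K₂ * h0Sq e b (u - v)) :
    (∑' n, h0Sq e b ((B u - B v) (e n)))
      ≤ K₂ * h0Sq e b (u - v) + (2 * K₁ * (⨆ n, b n) ^ 2 / ε) * vSq e b l ε (u - v) := by
  set w := u - v with hw
  set S := ⨆ n, b n
  have hbS : ∀ n, b n ≤ S := by
    obtain ⟨C, hC⟩ := hb_bdd
    exact fun n => le_ciSup (f := b) ⟨C, by rintro _ ⟨m, rfl⟩; exact hC m⟩ n
  have hterm : ∀ n, (((b n)⁻¹) ^ 2 * ⟪w, e n⟫) ^ 2 ≤
      ε⁻¹ * ((l n + ε * ((b n)⁻¹) ^ 2) * ((b n)⁻¹) ^ 2 * ⟪w, e n⟫ ^ 2) := by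
    intro n
    have h1 : 0 ≤ ε⁻¹ * (l n * ((b n)⁻¹) ^ 2 * ⟪w, e n⟫ ^ 2) := by
      have := hl_nonneg n
      positivity
    have h2 : ε⁻¹ * ((l n + ε * ((b n)⁻¹) ^ 2) * ((b n)⁻¹) ^ 2 * ⟪w, e n⟫ ^ 2) =
        ε⁻¹ * (l n * ((b n)⁻¹) ^ 2 * ⟪w, e n⟫ ^ 2) + (((b n)⁻¹) ^ 2 * ⟪w, e n⟫) ^ 2 := by
      linear_combination ((b n)⁻¹) ^ 4 * ⟪w, e n⟫ ^ 2 * inv_mul_cancel₀ hε.ne'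
    linarith
  have hsum : Summable (fun n => (((b n)⁻¹) ^ 2 * ⟪w, e n⟫) ^ 2) :=
    Summable.of_nonneg_of_le (fun n => sq_nonneg _) hterm (hwV.mul_left ε⁻¹)
  set T := invPow e b 2 w
  have hTn : ∀ n, ⟪T, e n⟫ = ((b n)⁻¹) ^ 2 * ⟪w, e n⟫ := inner_tsum_smul e _ hsum
  have hTV : ‖T‖ ^ 2 ≤ ε⁻¹ * vSq e b l ε w := by
    refine hasSum_le (fun n => ?_) (hasSum_inner_sq e T) (hwV.hasSum.mul_left ε⁻¹)
    rw [hTn]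
    exact hterm n
  have hwT : ‖w‖ ≤ S ^ 2 * ‖T‖ := by
    refine (sq_le_sq₀ (norm_nonneg w) (by positivity)).mp ?_
    rw [mul_pow]
    refine hasSum_le (fun n => ?_) (hasSum_inner_sq e w)
      ((hasSum_inner_sq e T).mul_left ((S ^ 2) ^ 2))
    have hwn : ⟪w, e n⟫ = b n ^ 2 * ⟪T, e n⟫ := by
      rw [hTn, ← mul_assoc, ← mul_pow, mul_inv_cancel₀ (hb_pos n).ne', one_pow, one_mul]
    have hbn := (hb_pos n).le
    have hbSn := hbS n
    rw [hwn, mul_pow]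
    gcongr
  have hinner : -⟪F u - F v, T⟫ ≤ K₁ * S ^ 2 * (ε⁻¹ * vSq e b l ε w) := by
    calc -⟪F u - F v, T⟫ ≤ ‖F u - F v‖ * ‖T‖ :=
          (neg_le_abs _).trans (abs_real_inner_le_norm _ _)
      _ ≤ K₁ * (S ^ 2 * ‖T‖) * ‖T‖ := by
          gcongr
          exact (hF u v).trans (by gcongr)
      _ = K₁ * S ^ 2 * ‖T‖ ^ 2 := by ring
      _ ≤ _ := by gcongr
  have hconst : 2 * K₁ * S ^ 2 / ε * vSq e b l ε w =
      2 * (K₁ * S ^ 2 * (ε⁻¹ * vSq e b l ε w)) := by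
    rw [div_eq_mul_inv]
    ring
  rw [hconst]
  linarith
end

section
/- Let (λ_n)_{n≥1} be a nondecreasing sequence of strictly positive real numbers with λ_n → ∞, and (b_n)_{n≥1} a bounded sequence of positive real numbers. Suppose there exist q > 0 and κ > 0 such that b_n^{2q} λ_n^{q−1} ≥ κ for all n. Then for every m ≥ 1 there exists a constant c(m) > 0 such that for every square-summable real sequence (c_n): ∑_n b_n^{-2} c_n² ≤ c(m) ∑_n c_n² + (1/m) ∑_n λ_n c_n² (an inequality in [0, +∞]). Equivalently, in the Hilbert space H with orthonormal basis (e_n) and c_n = ⟨x, e_n⟩, ‖x‖²_{H_0} ≤ c(m)‖x‖² + (1/m)‖x‖²_V for ‖x‖²_{H_0} := ∑_n b_n^{-2}c_n² and ‖x‖²_V := ∑_n λ_n c_n². -/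
/-!
Multiplying the spectral condition by `λₙ` gives `κ λₙ ≤ (bₙ² λₙ)^q`. As `λₙ → ∞`, the left side
exceeds `m^q` for all large `n`, and then `bₙ² λₙ ≥ m`, i.e. `bₙ⁻² ≤ λₙ / m`. The finitely many
remaining terms are absorbed into the constant, so the pointwise bound `bₙ⁻² ≤ c + λₙ / m`
holds for every `n`; the inequality follows by summation in `[0, ∞]`.
-/

open Filter

/-- the interpolation inequality in the proof of Corollary 3.1(3) of the
paper.  If `(λₙ)` is nondecreasing, positive, tending to `∞`, `(bₙ)` is a bounded sequence
of positive reals, and `bₙ^(2q) λₙ^(q-1) ≥ κ > 0` for some `q > 0`, then for every `m ≥ 1`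
there is `c(m) > 0` such that for every square-summable sequence `(cₙ)`,
`∑ bₙ⁻² cₙ² ≤ c(m) ∑ cₙ² + (1/m) ∑ λₙ cₙ²` (an inequality in `[0, +∞]`). -/
theorem stmt9 (l b : ℕ → ℝ)
    (hl_pos : ∀ n, 0 < l n) (hl_mono : Monotone l)
    (hl_top : Tendsto l atTop atTop)
    (hb_pos : ∀ n, 0 < b n) (hb_bdd : ∃ C : ℝ, ∀ n, b n ≤ C)
    (q κ : ℝ) (hq : 0 < q) (hκ : 0 < κ)
    (hspec : ∀ n, κ ≤ (b n) ^ (2 * q) * (l n) ^ (q - 1)) :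
    ∀ m : ℝ, 1 ≤ m → ∃ c : ℝ, 0 < c ∧
      ∀ cn : ℕ → ℝ, Summable (fun n => (cn n) ^ 2) →
        ∑' n, ENNReal.ofReal (((b n)⁻¹) ^ 2 * (cn n) ^ 2)
          ≤ ENNReal.ofReal c * ∑' n, ENNReal.ofReal ((cn n) ^ 2)
            + ENNReal.ofReal (1 / m) * ∑' n, ENNReal.ofReal (l n * (cn n) ^ 2) := by
  intro m hm
  have hm0 : 0 < m := by linarith
  obtain ⟨N, hN⟩ := eventually_atTop.1 (hl_top.eventually_ge_atTop (m ^ q / κ))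
  have hlarge : ∀ n, N ≤ n → ((b n)⁻¹) ^ 2 ≤ 1 / m * l n := by
    intro n hn
    have hl := hl_pos n
    have hb := hb_pos n
    have hb2 : 0 < (b n) ^ 2 := by positivity
    have hmul : κ * l n ≤ ((b n) ^ 2 * l n) ^ q := by
      have hpow : ((b n) ^ 2 * l n) ^ q = (b n) ^ (2 * q) * (l n) ^ (q - 1) * l n := by
        rw [Real.mul_rpow hb2.le hl.le, Real.rpow_sub_one hl.ne', Real.rpow_mul hb.le,
          Real.rpow_two]
        field_simp
      rw [hpow]
      exact mul_le_mul_of_nonneg_right (hspec n) hl.le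
    have hmq : m ^ q ≤ κ * l n := by
      have := (div_le_iff₀ hκ).1 (hN n hn)
      linarith
    have hml : m ≤ (b n) ^ 2 * l n :=
      (Real.rpow_le_rpow_iff hm0.le (by positivity) hq).1 (hmq.trans hmul)
    rw [inv_pow, inv_le_iff_one_le_mul₀ hb2, one_div, mul_assoc, inv_mul_eq_div, le_div_iff₀ hm0]
    linarith
  have hsum_nonneg : 0 ≤ ∑ i ∈ Finset.range N, ((b i)⁻¹) ^ 2 :=
    Finset.sum_nonneg fun i _ => sq_nonneg _
  refine ⟨1 + ∑ i ∈ Finset.range N, ((b i)⁻¹) ^ 2, by linarith, fun cn _ => ?_⟩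
  set c := 1 + ∑ i ∈ Finset.range N, ((b i)⁻¹) ^ 2 with hc
  have hc0 : 0 ≤ c := by linarith
  have hpt : ∀ n, ((b n)⁻¹) ^ 2 ≤ c + 1 / m * l n := by
    intro n
    have hlm : 0 ≤ 1 / m * l n := mul_nonneg (by positivity) (hl_pos n).le
    rcases le_or_gt N n with hn | hn
    · linarith [hlarge n hn]
    · have := Finset.single_le_sum (f := fun i => ((b i)⁻¹) ^ 2) (fun i _ => sq_nonneg _)
        (Finset.mem_range.2 hn)
      linarith
  rw [← ENNReal.tsum_mul_left, ← ENNReal.tsum_mul_left, ← ENNReal.tsum_add]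
  refine ENNReal.tsum_le_tsum fun n => ?_
  have hlc : 0 ≤ l n * (cn n) ^ 2 := mul_nonneg (hl_pos n).le (sq_nonneg _)
  rw [← ENNReal.ofReal_mul hc0, ← ENNReal.ofReal_mul (by positivity),
    ← ENNReal.ofReal_add (by positivity) (by positivity)]
  refine ENNReal.ofReal_le_ofReal ?_
  calc ((b n)⁻¹) ^ 2 * (cn n) ^ 2 ≤ (c + 1 / m * l n) * (cn n) ^ 2 :=
        mul_le_mul_of_nonneg_right (hpt n) (sq_nonneg _)
    _ = c * (cn n) ^ 2 + 1 / m * (l n * (cn n) ^ 2) := by ring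
end
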